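/- arXiv:1911.09473 — 3 statements merged into one kernel-verified Lean document; each statement's English description precedes it below -/
import Mathlib

section
/- For every L-sentence Φ there exists an integer N ≥ 2 such that for all integers m, m' ≥ N, Φ is true in the structure G_m if and only if Φ is true in the structure G_{m'}. -/
open FirstOrder

/-- The accessibility relation of the frame `G_m`:
worlds are `w_1, …, w_m` (encoded as `Sum.inl i` for `i : Fin m`, `w_{i+1} = Sum.inl i`)
together with `w*` (encoded as `Sum.inr ()`); `w_i R w_{i+1}` for `1 ≤ i < m`,
`w_m R w_1`, and `w_1 R w*`. -/
def Grel (m : ℕ) : (Fin m ⊕ Unit) → (Fin m ⊕ Unit) → Prop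
  | Sum.inl i, Sum.inl j => (j : ℕ) = (i : ℕ) + 1 ∨ ((i : ℕ) = m - 1 ∧ (j : ℕ) = 0)
  | Sum.inl i, Sum.inr _ => (i : ℕ) = 0
  | Sum.inr _, _ => False

/-- A frame `(W, R)` regarded as a structure for the first-order language with equality
whose only non-logical symbol is one binary relation symbol (`Language.graph`). -/
def frameStructure {W : Type*} (R : W → W → Prop) : Language.graph.Structure W where
  RelMap := fun {n} r x => match n, r with
    | 2, .adj => R (x 0) (x 1)

/-!
Place `w*` at `-1` and `w_{i+1}` at `i` on the integer line. Adjacency in `G_m` only asks which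
distances between worlds, and from worlds to the endpoints `-1` and `m - 1`, are `0` or `1`.
For `m, m' ≥ 2 ^ (n + 1)`, Duplicator wins the `n`-round Ehrenfeucht–Fraïssé game between `G_m`
and `G_{m'}` by keeping signed distances equal, or of the same sign and at least `2 ^ (r + 1)` on
both sides, while `r` rounds remain: answering relative to the pebble nearest to Spoiler's choice
halves the threshold.
-/

section BackAndForth

variable {L : Language} {M N α : Type*} [L.Structure M] [L.Structure N] {k n : ℕ}
  {P : Set (M × N)}

/-- The quantifier rank of a first-order formula: its maximal number of nested quantifiers, which
is the number of rounds of the Ehrenfeucht–Fraïssé game needed to control its truth value. -/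
def quantifierRank : ∀ {k : ℕ}, L.BoundedFormula α k → ℕ
  | _, .falsum => 0
  | _, .equal _ _ => 0
  | _, .rel _ _ => 0
  | _, .imp φ ψ => max (quantifierRank φ) (quantifierRank ψ)
  | _, .all φ => quantifierRank φ + 1

variable (L) in
/-- A partial isomorphism between `M` and `N`, encoded by its graph `P`: the pairing given by `P`
preserves and reflects equality and the relation symbols. Function symbols are ignored, so the
notion is the usual one only for relational languages. -/
structure IsPartialIso (P : Set (M × N)) : Prop where
  eq_iff : ∀ p ∈ P, ∀ q ∈ P, (p.1 = q.1 ↔ p.2 = q.2)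
  relMap_iff : ∀ {l : ℕ} (R : L.Relations l) (z : Fin l → M × N), (∀ i, z i ∈ P) →
    (Language.Structure.RelMap R (Prod.fst ∘ z) ↔ Language.Structure.RelMap R (Prod.snd ∘ z))

variable (L) in
/-- A graded back-and-forth system, i.e. a winning strategy for Duplicator in Ehrenfeucht–Fraïssé
games: `I n P` says that the position with set of pebbled pairs `P` is safe when `n` rounds
remain. -/
structure IsBackAndForth (I : ℕ → Set (M × N) → Prop) : Prop where
  isPartialIso : ∀ {n P}, I n P → IsPartialIso L P
  forth : ∀ {n P}, I (n + 1) P → ∀ a, ∃ b, I n (insert (a, b) P)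
  back : ∀ {n P}, I (n + 1) P → ∀ b, ∃ a, I n (insert (a, b) P)

theorem realize_fst_realize_snd_mem [L.IsRelational] {v : α → M × N} (hv : ∀ a, v a ∈ P)
    (t : L.Term α) : (t.realize (Prod.fst ∘ v), t.realize (Prod.snd ∘ v)) ∈ P := by
  cases t with
  | var a => exact hv a
  | func f _ => exact isEmptyElim f

theorem forall_snoc_mem_insert {β : Type*} {S : Set β} {z : Fin k → β} (hz : ∀ i, z i ∈ S)
    (b : β) (i : Fin (k + 1)) : (Fin.snoc z b : Fin (k + 1) → β) i ∈ insert b S := by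
  refine Fin.lastCases ?_ (fun j => ?_) i
  · simp
  · simpa using Or.inr (hz j)

theorem IsBackAndForth.realize_iff [L.IsRelational] {I : ℕ → Set (M × N) → Prop}
    (hI : IsBackAndForth L I) (φ : L.BoundedFormula α k) (hφ : quantifierRank φ ≤ n)
    (hP : I n P) {v : α → M × N} (hv : ∀ a, v a ∈ P) {z : Fin k → M × N} (hz : ∀ i, z i ∈ P) :
    φ.Realize (Prod.fst ∘ v) (Prod.fst ∘ z) ↔ φ.Realize (Prod.snd ∘ v) (Prod.snd ∘ z) := by
  induction φ generalizing n P with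
  | falsum => exact Iff.rfl
  | equal t₁ t₂ =>
    have hvz : ∀ c, Sum.elim v z c ∈ P := Sum.forall.2 ⟨hv, hz⟩
    simp only [Language.BoundedFormula.Realize, ← Sum.comp_elim]
    exact (hI.isPartialIso hP).eq_iff _ (realize_fst_realize_snd_mem hvz t₁) _
      (realize_fst_realize_snd_mem hvz t₂)
  | rel R ts =>
    have hvz : ∀ c, Sum.elim v z c ∈ P := Sum.forall.2 ⟨hv, hz⟩
    simp only [Language.BoundedFormula.Realize, ← Sum.comp_elim]
    exact (hI.isPartialIso hP).relMap_iff R _ fun i => realize_fst_realize_snd_mem hvz (ts i)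
  | imp φ ψ ihφ ihψ =>
    obtain ⟨hφ, hψ⟩ := max_le_iff.1 hφ
    exact imp_congr (ihφ hφ hP hv hz) (ihψ hψ hP hv hz)
  | all φ ih =>
    obtain ⟨n, rfl⟩ := Nat.exists_eq_add_one.2 (Nat.lt_of_lt_of_le (Nat.succ_pos _) hφ)
    have realize_snoc_iff {a : M} {b : N} (hab : I n (insert (a, b) P)) :
        φ.Realize (Prod.fst ∘ v) (Fin.snoc (Prod.fst ∘ z) a) ↔
          φ.Realize (Prod.snd ∘ v) (Fin.snoc (Prod.snd ∘ z) b) := by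
      simpa only [Fin.comp_snoc] using ih (Nat.le_of_succ_le_succ hφ) hab
        (fun c => Set.mem_insert_of_mem _ (hv c)) (forall_snoc_mem_insert hz (a, b))
    constructor
    · intro h b
      obtain ⟨a, hab⟩ := hI.back hP b
      exact (realize_snoc_iff hab).1 (h a)
    · intro h a
      obtain ⟨b, hab⟩ := hI.forth hP a
      exact (realize_snoc_iff hab).2 (h b)

theorem IsBackAndForth.sentence_realize_iff [L.IsRelational] {I : ℕ → Set (M × N) → Prop}
    (hI : IsBackAndForth L I) (Φ : L.Sentence) (hΦ : quantifierRank Φ ≤ n) (hP : I n P) :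
    M ⊨ Φ ↔ N ⊨ Φ := by
  have h := hI.realize_iff Φ hΦ hP (v := Empty.elim) (by simp) (z := Fin.elim0) (by simp)
  simpa only [Language.Sentence.Realize, Language.Formula.Realize, Subsingleton.elim _ default]
    using h

end BackAndForth

section Distances

variable {T T' d d' : ℤ} {S : Set (ℤ × ℤ)}

/-- Agreement of integers up to a threshold `T`: the two are equal, or both are at least `T`, or
both are at most `-T`. -/
def AgreeUpTo (T d d' : ℤ) : Prop :=
  d = d' ∨ (T ≤ d ∧ T ≤ d') ∨ (d ≤ -T ∧ d' ≤ -T)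

theorem AgreeUpTo.mono (hT : T ≤ T') (h : AgreeUpTo T' d d') : AgreeUpTo T d d' := by
  unfold AgreeUpTo at *
  omega

theorem AgreeUpTo.symm (h : AgreeUpTo T d d') : AgreeUpTo T d' d := by
  unfold AgreeUpTo at *
  omega

theorem AgreeUpTo.neg (h : AgreeUpTo T d d') : AgreeUpTo T (-d) (-d') := by
  unfold AgreeUpTo at *
  omega

theorem AgreeUpTo.eq_iff (h : AgreeUpTo T d d') {e : ℤ} (he : |e| < T) : d = e ↔ d' = e := by
  rw [abs_lt] at he
  unfold AgreeUpTo at h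
  omega

theorem AgreeUpTo.nonneg_iff (h : AgreeUpTo T d d') (hT : 0 < T) : 0 ≤ d ↔ 0 ≤ d' := by
  unfold AgreeUpTo at h
  omega

/- If `|e| < T`, clamping does nothing and the margin `2 * T - |e|` exceeds `T`. Otherwise
`|e| ≤ |e + d|` leaves two cases: `d` has the sign of `e`, or it has the opposite sign and
`2 * T ≤ 2 * |e| ≤ |d|`. -/
theorem AgreeUpTo.clamp_add (h : AgreeUpTo (2 * T) d d') (hT : 0 < T) {e : ℤ}
    (he : |e| ≤ |e + d|) : AgreeUpTo T (e + d) (max (-T) (min T e) + d') := by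
  simp only [AgreeUpTo, abs] at *
  omega

/-- The correspondence `S` between integers preserves signed distances up to the threshold `T`,
which is Duplicator's invariant on the positions of the pebbles. -/
def PreservesDistances (T : ℤ) (S : Set (ℤ × ℤ)) : Prop :=
  ∀ p ∈ S, ∀ q ∈ S, AgreeUpTo T (p.1 - q.1) (p.2 - q.2)

theorem PreservesDistances.swap (h : PreservesDistances T S) :
    PreservesDistances T (Prod.swap '' S) := by
  rintro _ ⟨p, hp, rfl⟩ _ ⟨q, hq, rfl⟩
  exact (h p hp q hq).symm

theorem PreservesDistances.insert_of_agreeUpTo (h : PreservesDistances T S) {x y : ℤ}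
    (hxy : ∀ p ∈ S, AgreeUpTo T (x - p.1) (y - p.2)) :
    PreservesDistances T (insert (x, y) S) := by
  rintro p (rfl | hp) q (rfl | hq)
  · exact Or.inl (by simp only [sub_self])
  · exact hxy q hq
  · simpa only [neg_sub] using (hxy p hp).neg
  · exact h p hp q hq

theorem PreservesDistances.exists_insert (hT : 0 < T) (hS : S.Finite)
    (h : PreservesDistances (2 * T) S) (x : ℤ) : ∃ y, PreservesDistances T (insert (x, y) S) := by
  suffices hy : ∃ y, ∀ q ∈ S, AgreeUpTo T (x - q.1) (y - q.2) by
    obtain ⟨y, hy⟩ := hy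
    exact ⟨y, .insert_of_agreeUpTo (fun p hp q hq => (h p hp q hq).mono (by omega)) hy⟩
  obtain rfl | hne := S.eq_empty_or_nonempty
  · exact ⟨x, by simp⟩
  obtain ⟨p, hp, hnearest⟩ := S.exists_min_image (fun q => |x - q.1|) hS hne
  refine ⟨p.2 + max (-T) (min T (x - p.1)), fun q hq => ?_⟩
  have hx : x - q.1 = (x - p.1) + (p.1 - q.1) := by ring
  have hy : p.2 + max (-T) (min T (x - p.1)) - q.2 =
      max (-T) (min T (x - p.1)) + (p.2 - q.2) := by ring
  rw [hx, hy]
  exact (h p hp q hq).clamp_add hT (hx ▸ hnearest q hq)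

end Distances

section Frame

variable {m m' n : ℕ}

/-- The frame `G_m` as a first-order structure. -/
instance frameStructureGrel (m : ℕ) : Language.graph.Structure (Fin m ⊕ Unit) :=
  frameStructure (Grel m)

/-- The position of a world of `G_m` on the integer line, with `w*` put to the left of `w_1`. -/
def position (m : ℕ) : Fin m ⊕ Unit → ℤ
  | Sum.inl i => (i : ℕ)
  | Sum.inr _ => -1

theorem position_injective (m : ℕ) : Function.Injective (position m) := by
  rintro (i | _) (j | _) h <;> simp only [position] at h
  · exact congrArg Sum.inl (Fin.ext (by omega))
  · omega
  · omega
  · rfl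

/- Phrased, like `grel_iff_position`, through distances to the endpoints `-1` and `m - 1`, so that
it can be compared across frames by `PreservesDistances`. -/
theorem mem_range_position {y : ℤ} :
    y ∈ Set.range (position m) ↔ 0 ≤ y - -1 ∧ 0 ≤ (m - 1 : ℤ) - y := by
  constructor
  · rintro ⟨i | _, rfl⟩ <;> simp only [position] <;> omega
  · intro hy
    obtain rfl | hne := eq_or_ne y (-1)
    · exact ⟨Sum.inr (), rfl⟩
    · exact ⟨Sum.inl ⟨y.toNat, by omega⟩, by simp only [position]; omega⟩

theorem grel_iff_position (a b : Fin m ⊕ Unit) : Grel m a b ↔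
    (¬position m a - -1 = 0 ∧ position m b - position m a = 1) ∨
      (position m a - (m - 1) = 0 ∧ position m b - -1 = 1) ∨
      (position m a - -1 = 1 ∧ position m b - -1 = 0) := by
  rcases a with i | _ <;> rcases b with j | _ <;> simp only [position, Grel, false_iff]
  · omega
  · omega
  · have := j.isLt
    omega
  · omega

/-- The positions of the pebbles of `P`, together with the two endpoints `-1` and `m - 1` of the
line, which act as pebbles that are always on the board. -/
def pebbles (m m' : ℕ) (P : Set ((Fin m ⊕ Unit) × (Fin m' ⊕ Unit))) : Set (ℤ × ℤ) :=
  {(-1, -1), ((m : ℤ) - 1, (m' : ℤ) - 1)} ∪ Prod.map (position m) (position m') '' P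

variable {P : Set ((Fin m ⊕ Unit) × (Fin m' ⊕ Unit))}

theorem left_mem_pebbles : ((-1, -1) : ℤ × ℤ) ∈ pebbles m m' P :=
  Or.inl (Set.mem_insert _ _)

theorem right_mem_pebbles : ((m : ℤ) - 1, (m' : ℤ) - 1) ∈ pebbles m m' P :=
  Or.inl (Set.mem_insert_of_mem _ rfl)

theorem position_mem_pebbles {p : (Fin m ⊕ Unit) × (Fin m' ⊕ Unit)} (hp : p ∈ P) :
    (position m p.1, position m' p.2) ∈ pebbles m m' P :=
  Or.inr ⟨p, hp, rfl⟩

theorem pebbles_insert (a : Fin m ⊕ Unit) (b : Fin m' ⊕ Unit) :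
    pebbles m m' (insert (a, b) P) = insert (position m a, position m' b) (pebbles m m' P) := by
  simp only [pebbles, Set.image_insert_eq, Set.union_insert, Prod.map_apply]

theorem pebbles_swap : pebbles m' m (Prod.swap '' P) = Prod.swap '' pebbles m m' P := by
  simp only [pebbles, Set.image_union, Set.image_pair, Set.image_image, Prod.swap_prod_mk]
  rfl

/-- Duplicator's invariant in the game between `G_m` and `G_{m'}` with `n` rounds remaining. -/
structure IsSafe (m m' n : ℕ) (P : Set ((Fin m ⊕ Unit) × (Fin m' ⊕ Unit))) : Prop where
  finite : P.Finite
  preservesDistances : PreservesDistances (2 ^ (n + 1)) (pebbles m m' P)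

theorem IsSafe.swap (h : IsSafe m m' n P) : IsSafe m' m n (Prod.swap '' P) where
  finite := h.finite.image _
  preservesDistances := pebbles_swap ▸ h.preservesDistances.swap

theorem IsSafe.forth (h : IsSafe m m' (n + 1) P) (a : Fin m ⊕ Unit) :
    ∃ b, IsSafe m m' n (insert (a, b) P) := by
  have hT : (0 : ℤ) < 2 ^ (n + 1) := by positivity
  have hfin : (pebbles m m' P).Finite := (Set.toFinite _).union (h.finite.image _)
  obtain ⟨y, hy⟩ := PreservesDistances.exists_insert hT hfin
    (pow_succ' (2 : ℤ) (n + 1) ▸ h.preservesDistances) (position m a)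
  have hnew := Set.mem_insert (position m a, y) (pebbles m m' P)
  have hy_mem : y ∈ Set.range (position m') := by
    obtain ⟨hleft, hright⟩ := mem_range_position.1 (Set.mem_range_self a)
    exact mem_range_position.2
      ⟨((hy _ hnew _ (Set.mem_insert_of_mem _ left_mem_pebbles)).nonneg_iff hT).1 hleft,
        ((hy _ (Set.mem_insert_of_mem _ right_mem_pebbles) _ hnew).nonneg_iff hT).1 hright⟩
  obtain ⟨b, rfl⟩ := hy_mem
  exact ⟨b, h.finite.insert _, pebbles_insert a b ▸ hy⟩

theorem IsSafe.back (h : IsSafe m m' (n + 1) P) (b : Fin m' ⊕ Unit) :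
    ∃ a, IsSafe m m' n (insert (a, b) P) := by
  obtain ⟨a, ha⟩ := h.swap.forth b
  refine ⟨a, ?_⟩
  simpa only [Set.image_insert_eq, Prod.swap_prod_mk, Set.image_image, Prod.swap_swap,
    Set.image_id'] using ha.swap

theorem IsSafe.isPartialIso (h : IsSafe m m' n P) : IsPartialIso Language.graph P := by
  have hT : (2 : ℤ) ≤ 2 ^ (n + 1) := le_self_pow₀ one_le_two n.succ_ne_zero
  have sub_eq_iff {s t : ℤ × ℤ} (hs : s ∈ pebbles m m' P) (ht : t ∈ pebbles m m' P) {e : ℤ}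
      (he : |e| < 2) : s.1 - t.1 = e ↔ s.2 - t.2 = e :=
    (h.preservesDistances s hs t ht).eq_iff (he.trans_le hT)
  have zero_lt : |(0 : ℤ)| < 2 := by norm_num
  have one_lt : |(1 : ℤ)| < 2 := by norm_num
  constructor
  · intro p hp q hq
    rw [← (position_injective m).eq_iff, ← (position_injective m').eq_iff, ← sub_eq_zero,
      ← sub_eq_zero (a := position m' p.2)]
    exact sub_eq_iff (position_mem_pebbles hp) (position_mem_pebbles hq) zero_lt
  · rintro _ ⟨⟩ z hz
    have h₀ := position_mem_pebbles (hz 0)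
    have h₁ := position_mem_pebbles (hz 1)
    change Grel m (z 0).1 (z 1).1 ↔ Grel m' (z 0).2 (z 1).2
    rw [grel_iff_position, grel_iff_position]
    exact or_congr
      (and_congr (not_congr (sub_eq_iff h₀ left_mem_pebbles zero_lt)) (sub_eq_iff h₁ h₀ one_lt))
      (or_congr
        (and_congr (sub_eq_iff h₀ right_mem_pebbles zero_lt)
          (sub_eq_iff h₁ left_mem_pebbles one_lt))
        (and_congr (sub_eq_iff h₀ left_mem_pebbles one_lt)
          (sub_eq_iff h₁ left_mem_pebbles zero_lt)))

theorem isBackAndForth_isSafe (m m' : ℕ) : IsBackAndForth Language.graph (IsSafe m m') where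
  isPartialIso := IsSafe.isPartialIso
  forth := IsSafe.forth
  back := IsSafe.back

theorem isSafe_empty (hm : 2 ^ (n + 1) ≤ m) (hm' : 2 ^ (n + 1) ≤ m') : IsSafe m m' n ∅ where
  finite := Set.finite_empty
  preservesDistances := by
    zify at hm hm'
    have hends : PreservesDistances (2 ^ (n + 1)) {((m : ℤ) - 1, (m' : ℤ) - 1)} := by
      rintro _ rfl _ rfl
      exact Or.inl (by simp only [sub_self])
    simp only [pebbles, Set.image_empty, Set.union_empty]
    refine hends.insert_of_agreeUpTo ?_
    rintro _ rfl
    exact Or.inr (Or.inr ⟨by simpa using hm, by simpa using hm'⟩)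

end Frame

theorem stmt4 (Φ : Language.graph.Sentence) :
    ∃ N : ℕ, 2 ≤ N ∧ ∀ m m' : ℕ, N ≤ m → N ≤ m' →
      (@FirstOrder.Language.Sentence.Realize Language.graph (Fin m ⊕ Unit)
        (frameStructure (Grel m)) Φ ↔
       @FirstOrder.Language.Sentence.Realize Language.graph (Fin m' ⊕ Unit)
        (frameStructure (Grel m')) Φ) := by
  refine ⟨2 ^ (quantifierRank Φ + 1), Nat.le_self_pow (Nat.succ_ne_zero _) 2,
    fun m m' hm hm' => ?_⟩
  exact (isBackAndForth_isSafe m m').sentence_realize_iff Φ le_rfl (isSafe_empty hm hm')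
end

section
/- For all integers m ≥ 2 and n ≥ 1 and every world w of the frame G_m: w satisfies condition B_n if and only if w = w_1 and n = m. -/
/-- `pathRel R k w v` : there is an `R`-path of length exactly `k` from `w` to `v`. -/
def pathRel {W : Type*} (R : W → W → Prop) : ℕ → W → W → Prop
  | 0 => fun w v => w = v
  | k + 1 => fun w v => ∃ u, R w u ∧ pathRel R k u v

/-- A world is a dead end if it sees no world. -/
def DeadEnd {W : Type*} (R : W → W → Prop) (v : W) : Prop := ∀ u, ¬ R v u

/-- Condition `B_n` at a world `w`: `w` has a dead-end successor; `w` sees in exactly `n`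
steps a world having a dead-end successor; and for no `k` with `2 ≤ k ≤ n - 1` does `w` see
in exactly `k` steps a world having a dead-end successor. -/
def CondB {W : Type*} (R : W → W → Prop) (n : ℕ) (w : W) : Prop :=
  (∃ v, R w v ∧ DeadEnd R v) ∧
  (∃ v, pathRel R n w v ∧ ∃ u, R v u ∧ DeadEnd R u) ∧
  (∀ k, 2 ≤ k → k ≤ n - 1 → ¬ ∃ v, pathRel R k w v ∧ ∃ u, R v u ∧ DeadEnd R u)

/-!
`w*` is the only dead end of `G_m`, so `w_1` is the only world that sees a dead end. Hence `B_n`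
holds at most at `w_1`, and there it says that some closed walk at `w_1` has length `n` while none
has a length from `2` to `n - 1`. A walk that reaches `w*` cannot return, so closed walks at `w_1`
only go round the cycle, and their lengths are the multiples of `m`. For `m ≥ 2` the condition
therefore singles out `n = m`.
-/

section Frame

variable {W : Type*} {R : W → W → Prop}

/-- A world sees a dead end if it has a dead-end successor, that is, if it satisfies the modal
formula `◇□⊥`. `CondB` contains this property in unfolded form. -/
def SeesDeadEnd (R : W → W → Prop) (w : W) : Prop := ∃ v, R w v ∧ DeadEnd R v

theorem DeadEnd.eq_of_pathRel {v u : W} (hv : DeadEnd R v) {k : ℕ} (h : pathRel R k v u) :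
    v = u := by
  cases k with
  | zero => exact h
  | succ k =>
    obtain ⟨x, hvx, -⟩ := h
    exact absurd hvx (hv x)

theorem condB_iff_of_seesDeadEnd_iff_eq {r : W} (hr : ∀ v, SeesDeadEnd R v ↔ v = r) (n : ℕ)
    (w : W) :
    CondB R n w ↔
      w = r ∧ pathRel R n r r ∧ ∀ k, 2 ≤ k → k ≤ n - 1 → ¬ pathRel R k r r := by
  change SeesDeadEnd R w ∧ (∃ v, pathRel R n w v ∧ SeesDeadEnd R v) ∧
    (∀ k, 2 ≤ k → k ≤ n - 1 → ¬ ∃ v, pathRel R k w v ∧ SeesDeadEnd R v) ↔ _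
  simp only [hr, exists_eq_right]
  exact and_congr_right fun hwr => hwr ▸ Iff.rfl

end Frame

section Grel

variable {m : ℕ}

theorem grel_inl_inl_iff_modEq {i j : Fin m} :
    Grel m (Sum.inl i) (Sum.inl j) ↔ i + 1 ≡ j [MOD m] := by
  change ((j : ℕ) = i + 1 ∨ ((i : ℕ) = m - 1 ∧ (j : ℕ) = 0)) ↔ ((i : ℕ) + 1) % m = j % m
  rw [Nat.mod_eq_of_lt j.isLt]
  obtain h | h : (i : ℕ) + 1 < m ∨ (i : ℕ) + 1 = m := by omega
  · rw [Nat.mod_eq_of_lt h]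
    omega
  · rw [h, Nat.mod_self]
    omega

theorem exists_grel_inl_inl (i : Fin m) : ∃ j : Fin m, Grel m (Sum.inl i) (Sum.inl j) :=
  ⟨⟨(i + 1) % m, Nat.mod_lt _ i.pos⟩, grel_inl_inl_iff_modEq.2 (Nat.mod_modEq _ _).symm⟩

theorem deadEnd_grel_iff {v : Fin m ⊕ Unit} : DeadEnd (Grel m) v ↔ v = Sum.inr () := by
  constructor
  · rcases v with i | _
    · obtain ⟨j, hij⟩ := exists_grel_inl_inl i
      exact fun hi => absurd hij (hi _)
    · exact fun _ => rfl
  · rintro rfl u hu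
    exact hu

theorem seesDeadEnd_grel_iff (hm : 0 < m) (v : Fin m ⊕ Unit) :
    SeesDeadEnd (Grel m) v ↔ v = Sum.inl ⟨0, hm⟩ := by
  simp only [SeesDeadEnd, deadEnd_grel_iff, exists_eq_right]
  rcases v with i | _
  · simp only [Grel, Sum.inl.injEq, Fin.ext_iff]
  · simp only [Grel, reduceCtorEq]

theorem pathRel_grel_inl_inl_iff_modEq {k : ℕ} {i j : Fin m} :
    pathRel (Grel m) k (Sum.inl i) (Sum.inl j) ↔ i + k ≡ j [MOD m] := by
  induction k generalizing i with
  | zero =>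
    simp only [pathRel, Sum.inl.injEq, add_zero]
    exact ⟨fun h => h ▸ rfl, fun h => Fin.ext (h.eq_of_lt_of_lt i.isLt j.isLt)⟩
  | succ k ih =>
    have shift {u : Fin m} (hu : Grel m (Sum.inl i) (Sum.inl u)) : i + (k + 1) ≡ u + k [MOD m] := by
      rw [add_comm k, ← add_assoc]
      exact (grel_inl_inl_iff_modEq.1 hu).add_right k
    constructor
    · rintro ⟨u | _, hu, huj⟩
      · exact (shift hu).trans (ih.1 huj)
      · exact absurd ((deadEnd_grel_iff.2 rfl).eq_of_pathRel huj) Sum.inr_ne_inl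
    · intro h
      obtain ⟨u, hu⟩ := exists_grel_inl_inl i
      exact ⟨Sum.inl u, hu, ih.2 ((shift hu).symm.trans h)⟩

theorem pathRel_grel_inl_self_iff_dvd {k : ℕ} {i : Fin m} :
    pathRel (Grel m) k (Sum.inl i) (Sum.inl i) ↔ m ∣ k := by
  rw [pathRel_grel_inl_inl_iff_modEq, Nat.add_modEq_left_iff]

end Grel

theorem dvd_and_forall_not_dvd_iff_eq {m n : ℕ} (hm : 2 ≤ m) (hn : 0 < n) :
    (m ∣ n ∧ ∀ k, 2 ≤ k → k ≤ n - 1 → ¬ m ∣ k) ↔ n = m := by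
  constructor
  · rintro ⟨hmn, hmin⟩
    have hle : m ≤ n := Nat.le_of_dvd hn hmn
    have hnot : ¬ m ≤ n - 1 := fun h => hmin m hm h dvd_rfl
    omega
  · rintro rfl
    exact ⟨dvd_rfl, fun k hk hkn => Nat.not_dvd_of_pos_of_lt (by omega) (by omega)⟩

theorem stmt7 (m n : ℕ) (hm : 2 ≤ m) (hn : 1 ≤ n) (w : Fin m ⊕ Unit) :
    CondB (Grel m) n w ↔ (w = Sum.inl (⟨0, by omega⟩ : Fin m) ∧ n = m) := by
  rw [condB_iff_of_seesDeadEnd_iff_eq (seesDeadEnd_grel_iff (Nat.zero_lt_of_lt hm))]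
  simp only [pathRel_grel_inl_self_iff_dvd, dvd_and_forall_not_dvd_iff_eq hm hn]
end

section
/- For every integer d ≥ 1, every even integer n ≥ 2, and every world w of the frame G_n, there exist an even integer m with 2 ≤ m ≤ d + 3 and a world w' of the frame G_m such that the subframe of G_n induced on the set of worlds reachable from w in at most d R-steps is isomorphic to the subframe of G_m induced on the set of worlds reachable from w' in at most d R-steps, via an isomorphism sending w to w'. (The induced subframe on a set X of worlds has universe X and all R-pairs between elements of X; an isomorphism is a bijection preserving the relation in both directions.) -/
/-- `Reach R d w v` : `v` is reachable from `w` in at most `d` `R`-steps. -/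
def Reach {W : Type*} (R : W → W → Prop) (d : ℕ) (w v : W) : Prop :=
  ∃ k, k ≤ d ∧ pathRel R k w v

/-!
Unravel `G_n` from a cycle world into an infinite ray `0 → 1 → 2 → ⋯` with an extra world `*`, the
number `a` standing for the world met after `a` steps along the cycle. Folding the ray back onto
`G_n` is a bounded morphism, and it is injective on the ball of radius `d + 1` as soon as
`d + 2 ≤ n`, so it identifies the balls of radius `d`. Such a ball remembers only which of the first
`d` steps pass through `w_1`, and this pattern can be reproduced on any cycle of length at least
`d + 2`. When `n` exceeds `d + 3`, take for `m` the even one of `d + 2` and `d + 3`; otherwise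
`m = n` works.
-/

section Ball

variable {V W X : Type*} {Q : V → V → Prop} {R : W → W → Prop} {S : X → X → Prop} {d : ℕ}
  {v : V} {w : W} {x : X}

theorem Reach.refl (R : W → W → Prop) (d : ℕ) (w : W) : Reach R d w w :=
  ⟨0, d.zero_le, rfl⟩

theorem reach_zero {w' : W} : Reach R 0 w w' ↔ w = w' := by
  simp [Reach, pathRel]

theorem reach_succ {w' : W} : Reach R (d + 1) w w' ↔ w = w' ∨ ∃ u, R w u ∧ Reach R d u w' := by
  constructor
  · rintro ⟨_ | k, hk, hp⟩
    · exact Or.inl hp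
    · obtain ⟨u, hwu, hu⟩ := hp
      exact Or.inr ⟨u, hwu, k, Nat.le_of_succ_le_succ hk, hu⟩
  · rintro (rfl | ⟨u, hwu, k, hk, hu⟩)
    · exact .refl R (d + 1) w
    · exact ⟨k + 1, Nat.succ_le_succ hk, u, hwu, hu⟩

theorem Reach.head {u w' : W} (hwu : R w u) (h : Reach R d u w') : Reach R (d + 1) w w' :=
  reach_succ.2 (Or.inr ⟨u, hwu, h⟩)

theorem Reach.mono {e : ℕ} {w' : W} (hde : d ≤ e) (h : Reach R d w w') : Reach R e w w' :=
  let ⟨k, hk, hp⟩ := h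
  ⟨k, hk.trans hde, hp⟩

theorem Reach.tail {u w' : W} (h : Reach R d w u) (huw' : R u w') : Reach R (d + 1) w w' := by
  induction d generalizing w with
  | zero =>
    obtain rfl := reach_zero.1 h
    exact .head huw' (.refl R 0 w')
  | succ d ih =>
    obtain rfl | ⟨t, hwt, ht⟩ := reach_succ.1 h
    · exact .head huw' (.refl R (d + 1) w')
    · exact .head hwt (ih ht)

/-- The balls of radius `d` around `w` and `x`, as induced subframes, are isomorphic by an
isomorphism sending `w` to `x`. -/
def BallIso (d : ℕ) (R : W → W → Prop) (w : W) (S : X → X → Prop) (x : X) : Prop :=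
  ∃ e : Subrel R (Reach R d w) ≃r Subrel S (Reach S d x), (e ⟨w, .refl R d w⟩).1 = x

theorem BallIso.refl (d : ℕ) (R : W → W → Prop) (w : W) : BallIso d R w R w :=
  ⟨.refl _, rfl⟩

theorem BallIso.symm (h : BallIso d R w S x) : BallIso d S x R w := by
  obtain ⟨e, he⟩ := h
  have hx : e ⟨w, .refl R d w⟩ = ⟨x, .refl S d x⟩ := Subtype.ext he
  exact ⟨e.symm, by rw [← hx, e.symm_apply_apply]⟩

theorem BallIso.trans (h₁ : BallIso d Q v R w) (h₂ : BallIso d R w S x) : BallIso d Q v S x := by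
  obtain ⟨e₁, he₁⟩ := h₁
  obtain ⟨e₂, he₂⟩ := h₂
  have hw : e₁ ⟨v, .refl Q d v⟩ = ⟨w, .refl R d w⟩ := Subtype.ext he₁
  exact ⟨e₁.trans e₂, by rw [RelIso.trans_apply, hw, he₂]⟩

/-- `f` satisfies the forth and back conditions of a bounded morphism (p-morphism) from `R` to `S`
at every world reachable from `w` in at most `d` steps. -/
def IsBoundedMorphismOn (d : ℕ) (R : W → W → Prop) (w : W) (S : X → X → Prop) (f : W → X) : Prop :=
  ∀ u, Reach R d w u → ∀ y, S (f u) y ↔ ∃ t, R u t ∧ f t = y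

namespace IsBoundedMorphismOn

variable {f : W → X}

theorem reach_iff (hf : IsBoundedMorphismOn d R w S f) {y : X} :
    Reach S d (f w) y ↔ ∃ u, Reach R d w u ∧ f u = y := by
  induction d generalizing w with
  | zero => simp [reach_zero]
  | succ d ih =>
    have hstep {t : W} (hwt : R w t) : Reach S d (f t) y ↔ ∃ u, Reach R d t u ∧ f u = y :=
      ih fun u hu => hf u (.head hwt hu)
    simp only [reach_succ, hf w (.refl R (d + 1) w)]
    constructor
    · rintro (rfl | ⟨_, ⟨t, hwt, rfl⟩, ht⟩)
      · exact ⟨w, Or.inl rfl, rfl⟩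
      · obtain ⟨u, hu, rfl⟩ := (hstep hwt).1 ht
        exact ⟨u, Or.inr ⟨t, hwt, hu⟩, rfl⟩
    · rintro ⟨u, rfl | ⟨t, hwt, hu⟩, rfl⟩
      · exact Or.inl rfl
      · exact Or.inr ⟨f t, ⟨t, hwt, rfl⟩, (hstep hwt).2 ⟨u, hu, rfl⟩⟩

-- Radius `d + 1` because the back condition at the boundary of the ball yields a successor that
-- may lie one step outside it.
theorem rel_iff (hf : IsBoundedMorphismOn d R w S f)
    (hinj : Set.InjOn f {u | Reach R (d + 1) w u}) {a b : W} (ha : Reach R d w a)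
    (hb : Reach R d w b) : S (f a) (f b) ↔ R a b := by
  rw [hf a ha]
  constructor
  · rintro ⟨t, hat, htb⟩
    obtain rfl : t = b := hinj (ha.tail hat) (hb.mono d.le_succ) htb
    exact hat
  · exact fun hab => ⟨b, hab, rfl⟩

theorem ballIso (hf : IsBoundedMorphismOn d R w S f)
    (hinj : Set.InjOn f {u | Reach R (d + 1) w u}) : BallIso d R w S (f w) := by
  have hbij : Set.BijOn f {u | Reach R d w u} {y | Reach S d (f w) y} :=
    ⟨fun u hu => hf.reach_iff.2 ⟨u, hu, rfl⟩, hinj.mono fun _ hu => Reach.mono d.le_succ hu,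
      fun _ hy => hf.reach_iff.1 hy⟩
  exact ⟨⟨hbij.equiv f, fun {a b} => hf.rel_iff hinj a.2 b.2⟩, rfl⟩

end IsBoundedMorphismOn

end Ball

section Unravelling

variable {d n : ℕ}

/-- The ray `0 → 1 → 2 → ⋯`, with one further world `Sum.inr ()` that is seen from the numbers
satisfying `P`: the shape of `G_n` unravelled from a cycle world, where `P a` says that the walk
along the cycle is at `w_1` after `a` steps. -/
def rayRel (P : ℕ → Prop) : ℕ ⊕ Unit → ℕ ⊕ Unit → Prop
  | Sum.inl a, Sum.inl b => b = a + 1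
  | Sum.inl a, Sum.inr _ => P a
  | Sum.inr _, _ => False

theorem le_add_of_reach_rayRel {P : ℕ → Prop} {a b : ℕ}
    (h : Reach (rayRel P) d (Sum.inl a) (Sum.inl b)) : b ≤ a + d := by
  induction d generalizing a with
  | zero => exact (Sum.inl_injective (reach_zero.1 h)).ge
  | succ d ih =>
    obtain hab | ⟨c | _, hac, hcb⟩ := reach_succ.1 h
    · exact (Sum.inl_injective hab).ge.trans (Nat.le_add_right a _)
    · have hc : c = a + 1 := hac
      have hb : b ≤ c + d := ih hcb
      omega
    · cases d with
      | zero => simp [reach_zero] at hcb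
      | succ d => simp [reach_succ, rayRel] at hcb

/-- The map folding the ray onto `G_n`, which walks along the cycle starting from the world `i`. -/
def foldRay (i : Fin n) : ℕ ⊕ Unit → Fin n ⊕ Unit :=
  Sum.map (fun a => ⟨(i + a) % n, Nat.mod_lt _ i.pos⟩) id

theorem foldRay_inl_zero (i : Fin n) : foldRay i (Sum.inl 0) = Sum.inl i := by
  simp [foldRay, Nat.mod_eq_of_lt i.isLt]

theorem grel_inl_inl_iff {i j : Fin n} :
    Grel n (Sum.inl i) (Sum.inl j) ↔ (i + 1) % n = (j : ℕ) := by
  obtain hi | hi : (i : ℕ) + 1 < n ∨ (i : ℕ) + 1 = n := by omega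
  · rw [Nat.mod_eq_of_lt hi]
    simp only [Grel]
    omega
  · rw [hi, Nat.mod_self]
    simp only [Grel]
    omega

theorem isBoundedMorphismOn_foldRay {P : ℕ → Prop} {i : Fin n}
    (hP : ∀ a ≤ d, P a ↔ n ∣ i + a) :
    IsBoundedMorphismOn d (rayRel P) (Sum.inl 0) (Grel n) (foldRay i) := by
  rintro (a | _) ha (j | _)
  · simp [foldRay, grel_inl_inl_iff, rayRel, Fin.ext_iff, Nat.add_assoc]
  · have had : a ≤ d := by simpa using le_add_of_reach_rayRel ha
    simp [foldRay, Grel, rayRel, hP a had, Nat.dvd_iff_mod_eq_zero]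
  · simp [foldRay, Grel, rayRel]
  · simp [foldRay, Grel, rayRel]

theorem injOn_foldRay (P : ℕ → Prop) (i : Fin n) (hd : d < n) :
    Set.InjOn (foldRay i) {u | Reach (rayRel P) d (Sum.inl 0) u} := by
  rintro (a | _) ha (b | _) hb hab
  · have had : a ≤ d := by simpa using le_add_of_reach_rayRel ha
    have hbd : b ≤ d := by simpa using le_add_of_reach_rayRel hb
    have hmod : i + a ≡ i + b [MOD n] := by simpa [foldRay, Nat.ModEq] using hab
    have : a ≡ b [MOD n] := hmod.add_left_cancel' i
    rw [this.eq_of_lt_of_lt (had.trans_lt hd) (hbd.trans_lt hd)]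
  · simp [foldRay] at hab
  · simp [foldRay] at hab
  · rfl

theorem ballIso_rayRel_grel (hn : d + 2 ≤ n) {P : ℕ → Prop} {i : Fin n}
    (hP : ∀ a ≤ d, P a ↔ n ∣ i + a) :
    BallIso d (rayRel P) (Sum.inl 0) (Grel n) (Sum.inl i) := by
  rw [← foldRay_inl_zero i]
  exact (isBoundedMorphismOn_foldRay hP).ballIso (injOn_foldRay P i hn)

end Unravelling

section Cycle

variable {d n m : ℕ}

theorem dvd_iff_eq_zero_or_eq_of_lt_two_mul {b : ℕ} (hb : b < 2 * n) :
    n ∣ b ↔ b = 0 ∨ b = n := by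
  constructor
  · exact fun h => or_iff_not_imp_left.2 fun h0 => Nat.eq_of_dvd_of_lt_two_mul h0 h hb
  · rintro (rfl | rfl)
    exacts [dvd_zero n, dvd_rfl]

theorem exists_fin_dvd_add_iff (hn : d < n) (hm : d + 1 < m) (i : Fin n) :
    ∃ j : Fin m, ∀ a ≤ d, m ∣ j + a ↔ n ∣ i + a := by
  -- A cycle world that meets `w_1` only after more than `d` steps is moved to distance `d + 1`.
  let j : ℕ := if (i : ℕ) = 0 then 0 else m - min (n - i) (d + 1)
  have hj : j < m := by grind
  refine ⟨⟨j, hj⟩, fun a ha => ?_⟩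
  rw [dvd_iff_eq_zero_or_eq_of_lt_two_mul (by grind),
    dvd_iff_eq_zero_or_eq_of_lt_two_mul (by omega)]
  grind

theorem ballIso_grel_inr (d n m : ℕ) :
    BallIso d (Grel n) (Sum.inr ()) (Grel m) (Sum.inr ()) := by
  have hpoint (k : ℕ) : BallIso d emptyRelation () (Grel k) (Sum.inr ()) := by
    have hf : IsBoundedMorphismOn d emptyRelation () (Grel k) Sum.inr := by
      simp [IsBoundedMorphismOn, Grel, emptyRelation]
    exact hf.ballIso Sum.inr_injective.injOn
  exact (hpoint n).symm.trans (hpoint m)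

theorem exists_ballIso_grel (hn : d + 2 ≤ n) (hm : d + 2 ≤ m) (w : Fin n ⊕ Unit) :
    ∃ w' : Fin m ⊕ Unit, BallIso d (Grel n) w (Grel m) w' := by
  obtain i | _ := w
  · obtain ⟨j, hj⟩ := exists_fin_dvd_add_iff (by omega) hm i
    have hi : BallIso d (rayRel fun a => n ∣ i + a) (Sum.inl 0) (Grel n) (Sum.inl i) :=
      ballIso_rayRel_grel hn fun _ _ => Iff.rfl
    exact ⟨Sum.inl j, hi.symm.trans (ballIso_rayRel_grel hm fun a ha => (hj a ha).symm)⟩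
  · exact ⟨Sum.inr (), ballIso_grel_inr d n m⟩

theorem exists_even_mem_Icc_succ (k : ℕ) : ∃ m ∈ Set.Icc k (k + 1), Even m := by
  obtain hk | hk := k.even_or_odd
  · exact ⟨k, ⟨le_rfl, k.le_succ⟩, hk⟩
  · exact ⟨k + 1, ⟨k.le_succ, le_rfl⟩, hk.add_one⟩

end Cycle

theorem stmt15 (d : ℕ) (hd : 1 ≤ d) (n : ℕ) (hn : 2 ≤ n) (hneven : Even n)
    (w : Fin n ⊕ Unit) :
    ∃ m : ℕ, 2 ≤ m ∧ m ≤ d + 3 ∧ Even m ∧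
      ∃ w' : Fin m ⊕ Unit,
        -- an isomorphism between the subframes induced on the worlds reachable
        -- in at most `d` steps from `w` (in `G_n`) and from `w'` (in `G_m`)
        ∃ e : {v : Fin n ⊕ Unit // Reach (Grel n) d w v} ≃
              {v : Fin m ⊕ Unit // Reach (Grel m) d w' v},
          (e ⟨w, ⟨0, Nat.zero_le d, rfl⟩⟩).1 = w' ∧
          ∀ a b : {v : Fin n ⊕ Unit // Reach (Grel n) d w v},
            Grel n a.1 b.1 ↔ Grel m (e a).1 (e b).1 := by
  suffices h : ∃ m, 2 ≤ m ∧ m ≤ d + 3 ∧ Even m ∧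
      ∃ w' : Fin m ⊕ Unit, BallIso d (Grel n) w (Grel m) w' by
    obtain ⟨m, hm, hmd, hmeven, w', e, he⟩ := h
    exact ⟨m, hm, hmd, hmeven, w', e.toEquiv, he, fun _ _ => e.map_rel_iff.symm⟩
  obtain hnd | hnd := le_or_gt n (d + 3)
  · exact ⟨n, hn, hnd, hneven, w, .refl d (Grel n) w⟩
  · obtain ⟨m, ⟨hdm, hmd⟩, hmeven⟩ := exists_even_mem_Icc_succ (d + 2)
    exact ⟨m, by omega, hmd, hmeven, exists_ballIso_grel (by omega) hdm w⟩
end
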